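/- Let q be a prime power, let P be the set of affine points of the Hermitian curve over F_{q²}, and for an integer m ≥ 0 let C(m) ⊆ F_{q²}^P be the F_{q²}-linear span of the evaluation vectors ev(x^a y^b) over all pairs (a,b) with 0 ≤ b < q and aq + b(q+1) ≤ m. If 0 ≤ m ≤ q² − 2, then C(m) ⊆ C(m)^{⊥_H}; in particular dim(C(m) ∩ C(m)^{⊥_H}) = dim C(m). -/

import Mathlib

/-!
Since `w ↦ w ^ q` is additive, self-orthogonality reduces to monomials `x^a y^b`, `x^c y^d` of order
at most `m`, that is, to the vanishing of `∑_{(α,β) ∈ P} α^(aq+c) β^(bq+d)`.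

The element `z = β^q + β - α^(q+1)` is a trace minus a norm, so `z^q = z` and `1 - z^(q-1)` is the
indicator of `P` inside `F × F` (`herm_indicator`). The sum is therefore
`∑_{F × F} α^(aq+c) β^(bq+d) (1 - z^(q-1))`. Weigh `x^A y^B` by `qA + (q+1)B`. The polynomial
`y^q + y - x^(q+1)` has weighted degree `q(q+1)`, while a monomial has nonzero sum over `F × F` only
if `A, B ≥ q² - 1`, so only if its weight is at least `(2q+1)(q²-1)`. Here the weights are at most
`(q+1)m + (q-1)q(q+1)`, and `m ≤ q² - 2` keeps this strictly below that bound
(`herm_sum_pow_curve`, `herm_sum_points`).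
-/

/-- The Hermitian dual of a subspace `W` of `ι → F`, with respect to the Hermitian inner
product `v ·_H w = ∑ i, (v i)^q * w i`. -/
def hermDual (F : Type) [Field F] (ι : Type) [Fintype ι] (q : ℕ)
    (W : Submodule F (ι → F)) : Submodule F (ι → F) where
  carrier := {x | ∀ w ∈ W, ∑ i, (w i) ^ q * x i = 0}
  zero_mem' := by intro w _; simp
  add_mem' := by
    intro a b ha hb w hw
    simp only [Pi.add_apply, mul_add, Finset.sum_add_distrib, ha w hw, hb w hw, add_zero]
  smul_mem' := by
    intro c x hx w hw
    simp only [Pi.smul_apply, smul_eq_mul, mul_left_comm, ← Finset.mul_sum, hx w hw, mul_zero]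

/-- The one-point Hermitian code `C(m)`: the span in `F^P` (where `P` is the set of affine
points of the Hermitian curve) of the evaluation vectors of the monomials `x^a y^b` with
`0 ≤ b < q` and `a*q + b*(q+1) ≤ m`. -/
def hermCode (F : Type) [Field F] (q m : ℕ) :
    Submodule F ({ab : F × F // ab.1 ^ (q + 1) = ab.2 ^ q + ab.2} → F) :=
  Submodule.span F
    {g | ∃ a b : ℕ, b < q ∧ a * q + b * (q + 1) ≤ m ∧
      g = fun pt => pt.val.1 ^ a * pt.val.2 ^ b}

/-- A monomial of weight below `(2q+1)(q²-1)` has an exponent below `q² - 1`, hence sums to zero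
over the plane. -/
lemma herm_sum_monomial {F : Type} [Field F] [Fintype F] {q : ℕ} (hF : Fintype.card F = q ^ 2)
    (A B : ℕ) (h : q * A + (q + 1) * B < (2 * q + 1) * (q ^ 2 - 1)) :
    ∑ v : F × F, v.1 ^ A * v.2 ^ B = 0 := by
  rw [Fintype.sum_prod_type]
  simp only
  rw [← Fintype.sum_mul_sum]
  rcases lt_or_ge A (q ^ 2 - 1) with hA | hA
  · rw [FiniteField.sum_pow_lt_card_sub_one F A (by rwa [hF]), zero_mul]
  rcases lt_or_ge B (q ^ 2 - 1) with hB | hB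
  · rw [FiniteField.sum_pow_lt_card_sub_one F B (by rwa [hF]), mul_zero]
  nlinarith [Nat.mul_le_mul_left q hA, Nat.mul_le_mul_left (q + 1) hB]

/-- Each factor `y^q + y - x^(q+1)` raises the weight by at most `q(q+1)`. -/
lemma herm_sum_pow_curve {F : Type} [Field F] [Fintype F] {q : ℕ} (hq : 0 < q)
    (hF : Fintype.card F = q ^ 2) (k : ℕ) :
    ∀ A B : ℕ, q * A + (q + 1) * B + k * (q * (q + 1)) < (2 * q + 1) * (q ^ 2 - 1) →
    ∑ v : F × F, v.1 ^ A * v.2 ^ B * (v.2 ^ q + v.2 - v.1 ^ (q + 1)) ^ k = 0 := by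
  induction k with
  | zero =>
    intro A B h
    simpa using herm_sum_monomial hF A B (by simpa using h)
  | succ k ih =>
    intro A B h
    have h1 := ih A (B + q) (by nlinarith)
    have h2 := ih A (B + 1) (by nlinarith)
    have h3 := ih (A + (q + 1)) B (by nlinarith)
    have key : ∀ v : F × F, v.1 ^ A * v.2 ^ B * (v.2 ^ q + v.2 - v.1 ^ (q + 1)) ^ (k + 1) =
        v.1 ^ A * v.2 ^ (B + q) * (v.2 ^ q + v.2 - v.1 ^ (q + 1)) ^ k +
        v.1 ^ A * v.2 ^ (B + 1) * (v.2 ^ q + v.2 - v.1 ^ (q + 1)) ^ k -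
        v.1 ^ (A + (q + 1)) * v.2 ^ B * (v.2 ^ q + v.2 - v.1 ^ (q + 1)) ^ k := by
      intro v
      rw [pow_add v.2 B q, pow_add v.2 B 1, pow_add v.1 A, pow_succ _ k]
      ring
    simp only [key, Finset.sum_sub_distrib, Finset.sum_add_distrib, h1, h2, h3]
    simp

/-- As `z = β^q + β - α^(q+1)` lies in the subfield of order `q`, `1 - z^(q-1)` is the indicator of
the affine Hermitian curve. -/
lemma herm_indicator {F : Type} [Field F] [Fintype F] [DecidableEq F] {p r q : ℕ} [Fact p.Prime]
    [CharP F p] (hq : q = p ^ r) (hr : 0 < r) (hF : Fintype.card F = q ^ 2) (α β : F) :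
    1 - (β ^ q + β - α ^ (q + 1)) ^ (q - 1) =
      if α ^ (q + 1) = β ^ q + β then 1 else 0 := by
  have hq1 : 1 < q := hq ▸ Nat.one_lt_pow hr.ne' (Fact.out : p.Prime).one_lt
  have hfrob : ∀ a : F, (a ^ q) ^ q = a := fun a => by
    rw [← pow_mul, ← sq, ← hF, FiniteField.pow_card]
  have hz : (β ^ q + β - α ^ (q + 1)) ^ q = β ^ q + β - α ^ (q + 1) := by
    have hs : (β ^ q + β - α ^ (q + 1)) ^ q =
        (β ^ q) ^ q + β ^ q - (α ^ (q + 1)) ^ q := by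
      simp only [hq, sub_pow_char_pow, add_pow_char_pow]
    rw [hs, hfrob, pow_succ α q, mul_pow, hfrob]
    ring
  split_ifs with h
  · rw [h, sub_self, zero_pow (by omega), sub_zero]
  · have hne : β ^ q + β - α ^ (q + 1) ≠ 0 := fun h0 => h (sub_eq_zero.1 h0).symm
    have hmul : (β ^ q + β - α ^ (q + 1)) * (β ^ q + β - α ^ (q + 1)) ^ (q - 1) =
        (β ^ q + β - α ^ (q + 1)) * 1 := by
      rw [mul_pow_sub_one (by omega), hz, mul_one]
    rw [mul_left_cancel₀ hne hmul, sub_self]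

/-- The bound `(q+1)(q²-2)` bounds the order of a product `v^q w` with `v`, `w` monomials
of order at most `q² - 2`. -/
lemma herm_sum_points {F : Type} [Field F] [Fintype F] [DecidableEq F] {p r q : ℕ} [Fact p.Prime]
    [CharP F p] (hq : q = p ^ r) (hr : 0 < r) (hF : Fintype.card F = q ^ 2) (A B : ℕ)
    (h : q * A + (q + 1) * B ≤ (q + 1) * (q ^ 2 - 2)) :
    ∑ pt : {ab : F × F // ab.1 ^ (q + 1) = ab.2 ^ q + ab.2}, pt.val.1 ^ A * pt.val.2 ^ B = 0 := by
  have hq1 : 1 < q := hq ▸ Nat.one_lt_pow hr.ne' (Fact.out : p.Prime).one_lt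
  have hbound : q * A + (q + 1) * B + (q - 1) * (q * (q + 1)) < (2 * q + 1) * (q ^ 2 - 1) := by
    obtain ⟨t, rfl⟩ : ∃ t, q = t + 2 := ⟨q - 2, by omega⟩
    have e1 : (t + 2) ^ 2 - 2 = t ^ 2 + 4 * t + 2 := by
      rw [Nat.sub_eq_iff_eq_add (by nlinarith)]; ring
    have e2 : (t + 2) ^ 2 - 1 = t ^ 2 + 4 * t + 3 := by
      rw [Nat.sub_eq_iff_eq_add (by nlinarith)]; ring
    have e3 : t + 2 - 1 = t + 1 := by omega
    rw [e1] at h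
    rw [e2, e3]
    nlinarith
  rw [← Finset.sum_subtype (Finset.univ.filter
    fun v : F × F => v.1 ^ (q + 1) = v.2 ^ q + v.2) (by simp) (fun v => v.1 ^ A * v.2 ^ B),
    Finset.sum_filter]
  have key : ∀ v : F × F, (if v.1 ^ (q + 1) = v.2 ^ q + v.2 then v.1 ^ A * v.2 ^ B else 0) =
      v.1 ^ A * v.2 ^ B - v.1 ^ A * v.2 ^ B * (v.2 ^ q + v.2 - v.1 ^ (q + 1)) ^ (q - 1) := by
    intro v
    rw [← mul_one_sub, herm_indicator hq hr hF, mul_ite, mul_one, mul_zero]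
  simp only [key, Finset.sum_sub_distrib]
  rw [herm_sum_pow_curve (by omega) hF _ A B hbound,
    herm_sum_monomial hF A B (by omega), sub_zero]

theorem stmt_7 (p r q : ℕ) (hp : p.Prime) (hr : 0 < r) (hq : q = p ^ r)
    (F : Type) [Field F] [Fintype F] [DecidableEq F] (hF : Fintype.card F = q ^ 2)
    (m : ℕ) (hm : m ≤ q ^ 2 - 2) :
    hermCode F q m ≤ hermDual F _ q (hermCode F q m) ∧
    Module.finrank F ↥(hermCode F q m ⊓ hermDual F _ q (hermCode F q m)) =
      Module.finrank F ↥(hermCode F q m) := by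
  have : Fact p.Prime := ⟨hp⟩
  have : CharP F p := charP_of_card_eq_prime_pow (f := r * 2) (by
    rw [hF, hq, pow_mul])
  have hq0 : q ≠ 0 := hq ▸ (pow_pos hp.pos r).ne'
  have hle : hermCode F q m ≤ hermDual F _ q (hermCode F q m) := by
    refine Submodule.span_le.2 ?_
    rintro _ ⟨c, d, -, hcd, rfl⟩ w hw
    induction hw using Submodule.span_induction with
    | mem w hw =>
      obtain ⟨a, b, -, hab, rfl⟩ := hw
      rw [← herm_sum_points hq hr hF (a * q + c) (b * q + d)
        (by nlinarith [Nat.mul_le_mul_left q (hab.trans hm), hcd.trans hm])]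
      refine Finset.sum_congr rfl fun pt _ => ?_
      rw [mul_pow, ← pow_mul, ← pow_mul, pow_add, pow_add]
      ring
    | zero => simp [hq0]
    | add u v _ _ hu hv =>
      have hadd : ∀ s t : F, (s + t) ^ q = s ^ q + t ^ q := fun s t => by
        rw [hq, add_pow_char_pow]
      simp only [Pi.add_apply, hadd, add_mul, Finset.sum_add_distrib, hu, hv, add_zero]
    | smul s u _ hu =>
      simp only [Pi.smul_apply, smul_eq_mul, mul_pow, mul_assoc, ← Finset.mul_sum, hu, mul_zero]
  exact ⟨hle, by rw [inf_eq_left.2 hle]⟩
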